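/- arXiv:2402.04514 — 7 statements merged into one kernel-verified Lean document; each statement's English description precedes it below -/
import Mathlib

section
/- Assume c i j = −(c j i) and dv i j = dv j i for all i, j ∈ ι, the partition-of-unity property Σ_{j ∈ ι} c i j + c∂ i = 0 for every i ∈ ι, and that u' satisfies the low-order scheme at every node. Then the total balance Σ_{i ∈ ι} m i • (u' i − u i) + Σ_{i ∈ ι} F∂ i = 0 holds, where F∂ i := τ • ((f (u∂ i) + f (u i))·(c∂ i)) − (τ * d∂ i) • (u∂ i − u i). -/
open Finset

/-- Contraction of a flux value `G : Fin M → Fin d → ℝ` with a vector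
`c : Fin d → ℝ`, yielding a state in `Fin M → ℝ`. -/
noncomputable def contr {M d : ℕ} (G : Fin M → Fin d → ℝ) (c : Fin d → ℝ) :
    Fin M → ℝ :=
  fun k => ∑ α, G k α * c α

theorem contr_add_left {M d : ℕ} (G H : Fin M → Fin d → ℝ) (c : Fin d → ℝ) :
    contr (G + H) c = contr G c + contr H c := by
  ext k
  simp [contr, add_mul, Finset.sum_add_distrib]

theorem contr_sum_right {M d : ℕ} {ι : Type*} (s : Finset ι) (G : Fin M → Fin d → ℝ)
    (c : ι → Fin d → ℝ) : contr G (∑ i ∈ s, c i) = ∑ i ∈ s, contr G (c i) := by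
  ext k
  simp only [contr, Finset.sum_apply, Finset.mul_sum]
  exact Finset.sum_comm

/-- Skew-symmetry and the partition of unity turn the interior fluxes into boundary fluxes. -/
theorem sum_sum_contr_eq_sum_contr_boundary {M d : ℕ} {ι : Type*} [Fintype ι]
    (c : ι → ι → Fin d → ℝ) (cB : ι → Fin d → ℝ) (G : ι → Fin M → Fin d → ℝ)
    (hc : ∀ i j, c i j = -(c j i)) (hpart : ∀ i, ∑ j, c i j + cB i = 0) :
    ∑ i, ∑ j, contr (G j) (c i j) = ∑ i, contr (G i) (cB i) := by
  rw [Finset.sum_comm]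
  refine Finset.sum_congr rfl fun j _ => ?_
  rw [← contr_sum_right, eq_neg_of_add_eq_zero_right (hpart j), ← Finset.sum_neg_distrib]
  simp only [← hc]

/-- Symmetric graph viscosities produce no net contribution. -/
theorem sum_sum_smul_sub_eq_zero {ι E : Type*} [Fintype ι] [AddCommGroup E] [Module ℝ E]
    (a : ι → ι → ℝ) (ha : ∀ i j, a i j = a j i) (u : ι → E) :
    ∑ i, ∑ j, a i j • (u j - u i) = 0 := by
  simp only [smul_sub, Finset.sum_sub_distrib]
  rw [sub_eq_zero, Finset.sum_comm]
  simp only [ha]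

/-- `cB`, `dB`, `uB` play the roles of the boundary data `c∂`, `d∂`, `u∂`,
and `FB` that of the boundary flux `F∂`. -/
theorem lowOrder_total_balance
    {d M : ℕ} (hd : 1 ≤ d) (hM : 1 ≤ M)
    {ι : Type*} [Fintype ι]
    (m : ι → ℝ) (hm : ∀ i, 0 < m i)
    (τ : ℝ) (hτ : 0 < τ)
    (c : ι → ι → (Fin d → ℝ)) (dv : ι → ι → ℝ)
    (cB : ι → (Fin d → ℝ)) (dB : ι → ℝ)
    (f : (Fin M → ℝ) → (Fin M → Fin d → ℝ))
    (u : ι → (Fin M → ℝ)) (uB : ι → (Fin M → ℝ)) (u' : ι → (Fin M → ℝ))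
    (hc : ∀ i j, c i j = -(c j i)) (hdv : ∀ i j, dv i j = dv j i)
    (hpart : ∀ i, ∑ j, c i j + cB i = 0)
    (hscheme : ∀ i,
      m i • (u' i - u i) +
        τ • ((∑ j, (contr (f (u j)) (c i j) - dv i j • (u j - u i))) +
          contr (f (uB i)) (cB i) - dB i • (uB i - u i)) = 0)
    (FB : ι → (Fin M → ℝ))
    (hFB : ∀ i, FB i =
      τ • contr (f (uB i) + f (u i)) (cB i) - (τ * dB i) • (uB i - u i)) :
    ∑ i, m i • (u' i - u i) + ∑ i, FB i = 0 := by
  have hflux := sum_sum_contr_eq_sum_contr_boundary c cB (fun i => f (u i)) hc hpart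
  have hvisc := sum_sum_smul_sub_eq_zero dv hdv u
  have hsum := Finset.sum_eq_zero fun i (_ : i ∈ Finset.univ) => hscheme i
  simp only [Finset.sum_add_distrib, Finset.sum_sub_distrib, ← Finset.smul_sum, hflux, hvisc]
    at hsum
  simp only [hFB, contr_add_left, mul_smul, ← smul_sub, ← Finset.smul_sum,
    Finset.sum_add_distrib, Finset.sum_sub_distrib]
  rw [← hsum]
  module
end

section
/- Let η : S → ℝ be a convex function and q : S → (Fin d → ℝ) a function (an entropy-flux), and write a ⬝ b := Σ_{α : Fin d} a α * b α for the dot product on Fin d → ℝ. Assume the partition-of-unity property Σ_{j ∈ ι} c i j + c∂ i = 0 for every i ∈ ι, that c i i = 0 for all i, that dv i j > 0 for all j ≠ i, that d∂ i > 0, that u' satisfies the low-order scheme, the CFL condition 1 + 2*τ*(D i)/(m i) ≥ 0 at node i with D i := −(Σ_{j ≠ i} dv i j) − d∂ i, and the bar-state entropy inequalities: η(ū i j) ≤ (1/2)*(η(u i) + η(u j)) − (1/(2 * dv i j)) * ((q (u j) − q (u i)) ⬝ (c i j)) for all j ≠ i, and η(ū∂ i) ≤ (1/2)*(η(u∂ i)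 + η(u i)) − (1/(2 * d∂ i)) * ((q (u∂ i) − q (u i)) ⬝ (c∂ i)), where ū i j := (1/2) • (u j + u i) − (1/(2 * dv i j)) • ((f (u j) − f (u i))·(c i j)) and ū∂ i := (1/2) • (u∂ i + u i) − (1/(2 * d∂ i)) • ((f (u∂ i) − f (u i))·(c∂ i)). Then the pointwise discrete entropy inequality holds: m i * (η(u' i) − η(u i)) + τ * ( Σ_{j ∈ ι} ( (q (u j)) ⬝ (c i j) − dv i j * (η(u j) − η(u i)) ) + (q (u∂ i)) ⬝ (c∂ i) − d∂ i * (η(u∂ i) − η(u i)) ) ≤ 0. -/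
open Finset

/-- Dot product on `Fin d → ℝ`. -/
noncomputable def dot {d : ℕ} (a b : Fin d → ℝ) : ℝ := ∑ α, a α * b α

theorem dot_eq_dotProduct {d : ℕ} (a b : Fin d → ℝ) : dot a b = a ⬝ᵥ b := rfl

/-- Jensen's inequality with unnormalized weights, two of the points being singled out. -/
theorem ConvexOn.mul_map_le_of_smul_eq {E ι : Type*} [AddCommGroup E] [Module ℝ E]
    {η : E → ℝ} (hη : ConvexOn ℝ Set.univ η) (s : Finset ι) {w : ι → ℝ} {p : ι → E}
    {a b W : ℝ} {x y z : E} (ha : 0 ≤ a) (hb : 0 ≤ b) (hw : ∀ j ∈ s, 0 ≤ w j) (hW : 0 < W)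
    (hsum : a + (b + ∑ j ∈ s, w j) = W)
    (hz : W • z = a • x + (b • y + ∑ j ∈ s, w j • p j)) :
    W * η z ≤ a * η x + (b * η y + ∑ j ∈ s, w j * η (p j)) := by
  let w' : Option (Option ι) → ℝ := fun o => o.elim a fun o => o.elim b w
  let p' : Option (Option ι) → E := fun o => o.elim x fun o => o.elim y p
  let t : Finset (Option (Option ι)) := insertNone (insertNone s)
  have hw' : ∀ o ∈ t, 0 ≤ w' o := by
    rintro (_ | _ | j) h
    · exact ha
    · exact hb
    · exact hw j (by simpa [t] using h)
  have hsum' : ∑ o ∈ t, w' o = W := by simpa [t, w', sum_insertNone] using hsum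
  have jensen := hη.map_centerMass_le (t := t) (w := w') (p := p') hw' (hsum'.symm ▸ hW)
    fun _ _ => Set.mem_univ _
  have hcenter : t.centerMass w' p' = z := by
    rw [Finset.centerMass, hsum', inv_smul_eq_iff₀ hW.ne', hz]
    simp [t, w', p', sum_insertNone]
  rw [hcenter, Finset.centerMass, hsum', smul_eq_mul, le_inv_mul_iff₀ hW] at jensen
  simpa [t, w', p', sum_insertNone] using jensen

/-- Algebraic identity rewriting a scalar low-order update at node `i` as a combination of the
old value and the bar values. -/
theorem lowOrder_eq_bar_combination {d : ℕ} {ι : Type*} [Fintype ι] [DecidableEq ι]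
    (m τ : ℝ) {c : ι → Fin d → ℝ} {dv : ι → ℝ} {cB : Fin d → ℝ} {dB : ℝ} {i : ι}
    (hpart : ∑ j, c j + cB = 0) (hci : c i = 0) (hdv : ∀ j, j ≠ i → dv j ≠ 0) (hdB : dB ≠ 0)
    (v : ι → ℝ) (vB : ℝ) (F : ι → Fin d → ℝ) (FB : Fin d → ℝ) :
    (m + 2 * τ * (-(∑ j ∈ univ.erase i, dv j) - dB)) * v i +
        (2 * τ * dB * (1 / 2 * (vB + v i) - 1 / (2 * dB) * dot (FB - F i) cB) +
          ∑ j ∈ univ.erase i, 2 * τ * dv j *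
            (1 / 2 * (v j + v i) - 1 / (2 * dv j) * dot (F j - F i) (c j))) =
      m * v i - τ * ((∑ j, (dot (F j) (c j) - dv j * (v j - v i))) +
        dot FB cB - dB * (vB - v i)) := by
  have hbar : ∀ j ∈ univ.erase i, 2 * τ * dv j *
      (1 / 2 * (v j + v i) - 1 / (2 * dv j) * dot (F j - F i) (c j)) =
      2 * τ * v i * dv j - τ * (dot (F j) (c j) - dv j * (v j - v i)) +
        τ * dot (F i) (c j) := by
    intro j hj
    have := hdv j (ne_of_mem_erase hj)
    simp only [dot_eq_dotProduct, sub_dotProduct]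
    field_simp
    ring
  have hpart' : ∑ j ∈ univ.erase i, dot (F i) (c j) = -dot (F i) cB := by
    rw [← add_sum_erase univ c (mem_univ i), hci, zero_add] at hpart
    simp only [dot_eq_dotProduct]
    rw [← dotProduct_sum, eq_neg_of_add_eq_zero_left hpart, dotProduct_neg]
  rw [sum_congr rfl hbar, sum_add_distrib, sum_sub_distrib, ← mul_sum, ← mul_sum, ← mul_sum,
    hpart', ← add_sum_erase univ (fun j => dot (F j) (c j) - dv j * (v j - v i)) (mem_univ i)]
  simp only [dot_eq_dotProduct, sub_dotProduct, hci, dotProduct_zero]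
  field_simp
  ring

/-- Pointwise discrete entropy inequality for the low-order update: `cB`,
`dB`, `uB` play the roles of the boundary data `c∂`, `d∂`, `u∂`; `ubar` and
`ubarB` are the bar states, and `D` the diagonal viscosity. -/
theorem lowOrder_pointwise_entropy_inequality
    {d M : ℕ} (hd : 1 ≤ d) (hM : 1 ≤ M)
    {ι : Type*} [Fintype ι] [DecidableEq ι]
    (m : ι → ℝ) (hm : ∀ i, 0 < m i)
    (τ : ℝ) (hτ : 0 < τ)
    (c : ι → ι → (Fin d → ℝ)) (dv : ι → ι → ℝ)
    (cB : ι → (Fin d → ℝ)) (dB : ι → ℝ)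
    (f : (Fin M → ℝ) → (Fin M → Fin d → ℝ))
    (u : ι → (Fin M → ℝ)) (uB : ι → (Fin M → ℝ)) (u' : ι → (Fin M → ℝ))
    (η : (Fin M → ℝ) → ℝ) (hη : ConvexOn ℝ Set.univ η)
    (q : (Fin M → ℝ) → (Fin d → ℝ))
    (hpart : ∀ i, ∑ j, c i j + cB i = 0)
    (hcii : ∀ i, c i i = 0)
    (hdv : ∀ i j, j ≠ i → 0 < dv i j)
    (hscheme : ∀ i,
      m i • (u' i - u i) +
        τ • ((∑ j, (contr (f (u j)) (c i j) - dv i j • (u j - u i))) +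
          contr (f (uB i)) (cB i) - dB i • (uB i - u i)) = 0)
    (ubar : ι → ι → (Fin M → ℝ))
    (hubar : ∀ i j, ubar i j =
      (1 / 2 : ℝ) • (u j + u i) -
        (1 / (2 * dv i j)) • contr (f (u j) - f (u i)) (c i j))
    (ubarB : ι → (Fin M → ℝ))
    (hubarB : ∀ i, ubarB i =
      (1 / 2 : ℝ) • (uB i + u i) -
        (1 / (2 * dB i)) • contr (f (uB i) - f (u i)) (cB i))
    (D : ι → ℝ)
    (hD : ∀ i, D i = -(∑ j ∈ Finset.univ.erase i, dv i j) - dB i)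
    (i : ι)
    (hdB : 0 < dB i)
    (hCFL : 0 ≤ 1 + 2 * τ * D i / m i)
    (hbar_entropy : ∀ j, j ≠ i →
      η (ubar i j) ≤ (1 / 2) * (η (u i) + η (u j)) -
        (1 / (2 * dv i j)) * dot (q (u j) - q (u i)) (c i j))
    (hbarB_entropy :
      η (ubarB i) ≤ (1 / 2) * (η (uB i) + η (u i)) -
        (1 / (2 * dB i)) * dot (q (uB i) - q (u i)) (cB i)) :
    m i * (η (u' i) - η (u i)) +
      τ * ((∑ j, (dot (q (u j)) (c i j) - dv i j * (η (u j) - η (u i)))) +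
        dot (q (uB i)) (cB i) - dB i * (η (uB i) - η (u i))) ≤ 0 := by
  have hmi := hm i
  have hdv_erase : ∀ j ∈ univ.erase i, 0 < dv i j := fun j hj => hdv i j (ne_of_mem_erase hj)
  have identity := lowOrder_eq_bar_combination (m i) τ (hpart i) (hcii i)
    (fun j hj => (hdv i j hj).ne') hdB.ne'
  rw [← hD i] at identity
  have hweight : 0 ≤ m i + 2 * τ * D i := by
    have := mul_nonneg hmi.le hCFL
    rwa [mul_add, mul_one, mul_div_cancel₀ _ hmi.ne'] at this
  have hcombination : m i • u' i = (m i + 2 * τ * D i) • u i +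
      ((2 * τ * dB i) • ubarB i + ∑ j ∈ univ.erase i, (2 * τ * dv i j) • ubar i j) := by
    ext k
    have hk := congrFun (hscheme i) k
    have hid := identity (fun j => u j k) (uB i k) (fun j => f (u j) k) (f (uB i) k)
    simp only [Pi.add_apply, Pi.sub_apply, Pi.smul_apply, Finset.sum_apply, smul_eq_mul,
      Pi.zero_apply, hubar, hubarB] at hk ⊢
    refine Eq.trans ?_ hid.symm
    change m i * (u' i k - u i k) + τ * ((∑ j, (dot (f (u j) k) (c i j) -
      dv i j * (u j k - u i k))) + dot (f (uB i) k) (cB i) - dB i * (uB i k - u i k)) = 0 at hk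
    linarith
  have jensen := hη.mul_map_le_of_smul_eq (univ.erase i) hweight (by positivity)
    (fun j hj => by have := hdv_erase j hj; positivity) hmi
    (by rw [hD i, ← mul_sum]; ring) hcombination
  have hB := mul_le_mul_of_nonneg_left hbarB_entropy (by positivity : 0 ≤ 2 * τ * dB i)
  have hsum : ∑ j ∈ univ.erase i, 2 * τ * dv i j * η (ubar i j) ≤
      ∑ j ∈ univ.erase i, 2 * τ * dv i j * (1 / 2 * (η (u j) + η (u i)) -
        1 / (2 * dv i j) * dot (q (u j) - q (u i)) (c i j)) := by
    refine sum_le_sum fun j hj => ?_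
    have := hdv_erase j hj
    rw [add_comm (η (u j))]
    exact mul_le_mul_of_nonneg_left (hbar_entropy j (ne_of_mem_erase hj)) (by positivity)
  have hid := identity (fun j => η (u j)) (η (uB i)) (fun j => q (u j)) (q (uB i))
  linarith
end

section
/- Let η : S → ℝ and q : S → (Fin d → ℝ) be functions, and write a ⬝ b := Σ_{α : Fin d} a α * b α for the dot product on Fin d → ℝ. Assume c i j = −(c j i) and dv i j = dv j i for all i, j ∈ ι, the partition-of-unity property Σ_{j ∈ ι} c i j + c∂ i = 0 for every i ∈ ι, and that at every node i ∈ ι the pointwise discrete entropy inequality holds: m i * (η(u' i) − η(u i)) + τ * ( Σ_{j ∈ ι} ( (q (u j)) ⬝ (c i j) − dv i j * (η(u j) − η(u i)) ) + (q (u∂ i)) ⬝ (c∂ i) − d∂ i * (η(u∂ i) − η(u i)) ) ≤ 0. Then the global entropy inequality holds: Σ_{i ∈ ι} m i * η(u' i) + τ * Σ_{i ∈ ι} Q∂ i ≤ Σ_{i ∈ ι} m i * η(u i), where Q∂ i := (q (u∂ i) + q (u i)) ⬝ (c∂ i) − d∂ i * (η(u∂ i) − η(u i)). -/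
open Finset

/-- The interior entropy fluxes telescope to boundary fluxes. -/
theorem sum_sum_dot_eq_sum_dot_boundary {d : ℕ} {ι : Type*} [Fintype ι]
    (c : ι → ι → (Fin d → ℝ)) (cB : ι → (Fin d → ℝ)) (hc : ∀ i j, c i j = -(c j i))
    (hpart : ∀ i, ∑ j, c i j + cB i = 0) (v : ι → (Fin d → ℝ)) :
    ∑ i, ∑ j, dot (v j) (c i j) = ∑ i, dot (v i) (cB i) := by
  rw [sum_comm]
  refine sum_congr rfl fun j _ => ?_
  have hcol : ∑ i, c i j = cB j := by
    simp_rw [hc _ j, sum_neg_distrib]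
    exact neg_eq_of_add_eq_zero_right (hpart j)
  rw [← hcol]
  exact (dotProduct_sum (v j) univ fun i => c i j).symm

/-- Symmetric graph viscosities conserve the total of any scalar nodal quantity. -/
theorem sum_sum_symm_mul_sub_eq_zero {ι : Type*} [Fintype ι]
    (w : ι → ι → ℝ) (hw : ∀ i j, w i j = w j i) (e : ι → ℝ) :
    ∑ i, ∑ j, w i j * (e j - e i) = 0 := by
  simp_rw [mul_sub, sum_sub_distrib]
  rw [sum_comm, sub_eq_zero]
  exact sum_congr rfl fun i _ => sum_congr rfl fun j _ => by rw [hw]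

/-- Global discrete entropy inequality: `cB`, `dB`, `uB` play the roles of the
boundary data `c∂`, `d∂`, `u∂`, and `QB` that of the viscous boundary entropy
flux `Q∂`. -/
theorem lowOrder_global_entropy_inequality
    {d M : ℕ} (hd : 1 ≤ d) (hM : 1 ≤ M)
    {ι : Type*} [Fintype ι]
    (m : ι → ℝ) (hm : ∀ i, 0 < m i)
    (τ : ℝ) (hτ : 0 < τ)
    (c : ι → ι → (Fin d → ℝ)) (dv : ι → ι → ℝ)
    (cB : ι → (Fin d → ℝ)) (dB : ι → ℝ)
    (u : ι → (Fin M → ℝ)) (u' : ι → (Fin M → ℝ)) (uB : ι → (Fin M → ℝ))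
    (η : (Fin M → ℝ) → ℝ) (q : (Fin M → ℝ) → (Fin d → ℝ))
    (hc : ∀ i j, c i j = -(c j i)) (hdv : ∀ i j, dv i j = dv j i)
    (hpart : ∀ i, ∑ j, c i j + cB i = 0)
    (hpointwise : ∀ i,
      m i * (η (u' i) - η (u i)) +
        τ * ((∑ j, (dot (q (u j)) (c i j) - dv i j * (η (u j) - η (u i)))) +
          dot (q (uB i)) (cB i) - dB i * (η (uB i) - η (u i))) ≤ 0)
    (QB : ι → ℝ)
    (hQB : ∀ i, QB i =
      dot (q (uB i) + q (u i)) (cB i) - dB i * (η (uB i) - η (u i))) :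
    ∑ i, m i * η (u' i) + τ * ∑ i, QB i ≤ ∑ i, m i * η (u i) := by
  have hflux := sum_sum_dot_eq_sum_dot_boundary c cB hc hpart fun i => q (u i)
  have hvisc := sum_sum_symm_mul_sub_eq_zero dv hdv fun i => η (u i)
  have hadd : ∀ i, dot (q (uB i) + q (u i)) (cB i) =
      dot (q (uB i)) (cB i) + dot (q (u i)) (cB i) := fun i => add_dotProduct _ _ _
  have hsum := sum_nonpos fun i (_ : i ∈ univ) => hpointwise i
  simp only [sum_add_distrib, sum_sub_distrib, ← mul_sum, mul_sub (m _), hvisc, hflux] at hsum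
  simp only [hQB, hadd, sum_add_distrib, sum_sub_distrib]
  linarith
end

section
/- Let mM : ι → ι → ℝ be a consistent mass matrix with row sums Σ_{j ∈ ι} mM i j = m i for every i ∈ ι, and assume the partition-of-unity property Σ_{j ∈ ι} c i j + c∂ i = 0 for every i ∈ ι. Suppose uL satisfies the low-order scheme with viscosities dvL, d∂L, and uH satisfies the high-order scheme: Σ_{j ∈ ι} mM i j • (uH j − u j) + τ • ( Σ_{j ∈ ι} ( (f (u j))·(c i j) − dvH i j • (u j − u i) ) + (f (u∂ i))·(c∂ i) − d∂H i • (u∂ i − u i) ) = 0 for every i. Define FL i j := τ • ((f (u j) + f (u i))·(c i j)) − (τ * dvL i j) • (u j − u i), FH i j := τ • ((f (u j) + f (u i))·(c i j)) − (τ * dvH i j) • (u j − u i) + (mM i j − (if i = j then m i else 0)) • ((uH j − u j) − (uH i − u i)), F∂L i := τ • ((f (u∂ i) + f (u i))·(c∂ i)) − (τ * d∂L i) • (u∂ i − u i), F∂H i := τ • ((f (u∂ i) + f (u i))·(c∂ i)) − (τ * d∂H i) • (u∂ i − u i), and set A i j := FL i j − FH i j and A∂ i := F∂L i − F∂H i.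 Then for every i ∈ ι: m i • (uH i) = m i • (uL i) + Σ_{j ∈ ι} A i j + A∂ i. -/
open Finset

/-- High/low-order flux identity: `cB`, `uB` play the roles of the boundary
data `c∂`, `u∂`; `dBL`, `dBH` those of the boundary viscosities `d∂L`, `d∂H`;
`FBL`, `FBH`, `AB` those of `F∂L`, `F∂H`, `A∂`. -/
theorem high_low_order_identity
    {d M : ℕ} (hd : 1 ≤ d) (hM : 1 ≤ M)
    {ι : Type*} [Fintype ι] [DecidableEq ι]
    (m : ι → ℝ) (hm : ∀ i, 0 < m i)
    (mM : ι → ι → ℝ) (hrow : ∀ i, ∑ j, mM i j = m i)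
    (τ : ℝ) (hτ : 0 < τ)
    (c : ι → ι → (Fin d → ℝ))
    (dvL : ι → ι → ℝ) (dBL : ι → ℝ)
    (dvH : ι → ι → ℝ) (dBH : ι → ℝ)
    (cB : ι → (Fin d → ℝ))
    (f : (Fin M → ℝ) → (Fin M → Fin d → ℝ))
    (u : ι → (Fin M → ℝ)) (uB : ι → (Fin M → ℝ))
    (uL : ι → (Fin M → ℝ)) (uH : ι → (Fin M → ℝ))
    (hpart : ∀ i, ∑ j, c i j + cB i = 0)
    (hlow : ∀ i,
      m i • (uL i - u i) +
        τ • ((∑ j, (contr (f (u j)) (c i j) - dvL i j • (u j - u i))) +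
          contr (f (uB i)) (cB i) - dBL i • (uB i - u i)) = 0)
    (hhigh : ∀ i,
      (∑ j, mM i j • (uH j - u j)) +
        τ • ((∑ j, (contr (f (u j)) (c i j) - dvH i j • (u j - u i))) +
          contr (f (uB i)) (cB i) - dBH i • (uB i - u i)) = 0)
    (FL : ι → ι → (Fin M → ℝ))
    (hFL : ∀ i j, FL i j =
      τ • contr (f (u j) + f (u i)) (c i j) - (τ * dvL i j) • (u j - u i))
    (FH : ι → ι → (Fin M → ℝ))
    (hFH : ∀ i j, FH i j =
      τ • contr (f (u j) + f (u i)) (c i j) - (τ * dvH i j) • (u j - u i) +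
        (mM i j - (if i = j then m i else 0)) • ((uH j - u j) - (uH i - u i)))
    (FBL : ι → (Fin M → ℝ))
    (hFBL : ∀ i, FBL i =
      τ • contr (f (uB i) + f (u i)) (cB i) - (τ * dBL i) • (uB i - u i))
    (FBH : ι → (Fin M → ℝ))
    (hFBH : ∀ i, FBH i =
      τ • contr (f (uB i) + f (u i)) (cB i) - (τ * dBH i) • (uB i - u i))
    (A : ι → ι → (Fin M → ℝ)) (hA : ∀ i j, A i j = FL i j - FH i j)
    (AB : ι → (Fin M → ℝ)) (hAB : ∀ i, AB i = FBL i - FBH i) :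
    ∀ i, m i • uH i = m i • uL i + ∑ j, A i j + AB i := by
  intro i
  have hAij : ∀ j, A i j =
      τ • (contr (f (u j)) (c i j) - dvL i j • (u j - u i)) -
        τ • (contr (f (u j)) (c i j) - dvH i j • (u j - u i)) -
        mM i j • (uH j - u j) + mM i j • (uH i - u i) := by
    intro j
    rw [hA, hFL, hFH]
    split_ifs with h
    · subst h
      module
    · module
  have hsum : ∑ j, A i j =
      τ • ∑ j, (contr (f (u j)) (c i j) - dvL i j • (u j - u i)) -
        τ • ∑ j, (contr (f (u j)) (c i j) - dvH i j • (u j - u i)) -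
        ∑ j, mM i j • (uH j - u j) + m i • (uH i - u i) := by
    rw [sum_congr rfl fun j _ => hAij j, sum_add_distrib, sum_sub_distrib, sum_sub_distrib,
      ← smul_sum, ← smul_sum, ← sum_smul, hrow]
  rw [hsum, hAB, hFBL, hFBH]
  linear_combination (norm := module) hhigh i - hlow i
end

section
/- Let B ⊆ S be a convex set and suppose the blended update u'' : ι → S satisfies, at a node i ∈ ι, m i • (u'' i) = m i • (uL i) + Σ_{j ∈ ι} (ℓ i j) • (A i j) + (ℓ∂ i) • (A∂ i) with m i > 0. Set κ := 1/(Fintype.card ι + 1), P i j := (1/(κ * m i)) • (A i j), and P∂ i := (1/(κ * m i)) • (A∂ i). If uL i + (ℓ i j) • (P i j) ∈ B for every j ∈ ι and uL i + (ℓ∂ i) • (P∂ i) ∈ B, then u'' i ∈ B. -/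
open Finset

/-- The limited update stays in a convex set containing the limited
unidirectional updates: `AB`, `lB`, `PB` play the roles of the boundary
quantities `A∂`, `ℓ∂`, `P∂`, and `u''` is the blended (limited) update. -/
theorem limited_update_mem_convex_set
    {M : ℕ} (hM : 1 ≤ M)
    {ι : Type*} [Fintype ι] (hι : 1 ≤ Fintype.card ι)
    (B : Set (Fin M → ℝ)) (hB : Convex ℝ B)
    (m : ι → ℝ)
    (uL : ι → (Fin M → ℝ)) (u'' : ι → (Fin M → ℝ))
    (A : ι → ι → (Fin M → ℝ)) (AB : ι → (Fin M → ℝ))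
    (l : ι → ι → ℝ) (lB : ι → ℝ)
    (i : ι) (hmi : 0 < m i)
    (hlim : m i • u'' i =
      m i • uL i + ∑ j, (l i j) • A i j + (lB i) • AB i)
    (κ : ℝ) (hκ : κ = 1 / (Fintype.card ι + 1))
    (P : ι → ι → (Fin M → ℝ))
    (hP : ∀ i j, P i j = (1 / (κ * m i)) • A i j)
    (PB : ι → (Fin M → ℝ))
    (hPB : ∀ i, PB i = (1 / (κ * m i)) • AB i)
    (hmem : ∀ j, uL i + (l i j) • P i j ∈ B)
    (hmemB : uL i + (lB i) • PB i ∈ B) :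
    u'' i ∈ B := by
  have hcard : (0 : ℝ) < Fintype.card ι + 1 := by positivity
  have hκ0 : 0 < κ := hκ ▸ one_div_pos.mpr hcard
  have hκ1 : κ * (Fintype.card ι + 1) = 1 := by rw [hκ, one_div_mul_cancel hcard.ne']
  let z : Option ι → (Fin M → ℝ) := fun o =>
    o.elim (uL i + lB i • PB i) fun j => uL i + l i j • P i j
  have hz : ∑ o, κ • z o ∈ B := by
    refine hB.sum_mem (fun _ _ => hκ0.le) ?_ ?_
    · simpa [mul_comm] using hκ1
    · rintro (_ | j) -
      exacts [hmemB, hmem j]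
  have hscale (c : ℝ) (v : Fin M → ℝ) :
      m i • κ • c • (1 / (κ * m i)) • v = c • v := by
    simp only [smul_smul]
    congr 1
    field_simp
  have hu : m i • u'' i = m i • ∑ o, κ • z o := by
    have hsplit : m i • uL i = m i • (Fintype.card ι : ℝ) • κ • uL i + m i • κ • uL i := by
      simp only [smul_smul, ← add_smul]
      congr 1
      linear_combination -(m i) * hκ1
    simp only [z, Fintype.sum_option, Option.elim, hP, hPB, smul_add, Finset.smul_sum,
      Finset.sum_add_distrib, hscale, Finset.sum_const, Finset.card_univ, hlim]
    rw [hsplit, ← Nat.cast_smul_eq_nsmul ℝ]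
    abel
  rwa [smul_right_injective _ hmi.ne' hu]
end

section
/- The admissible set of the compressible Euler equations, 𝒜 := { (ρ, mv, E) ∈ ℝ × (EuclideanSpace ℝ (Fin d)) × ℝ : 0 < ρ and 0 < E − ‖mv‖²/(2ρ) }, is a convex subset of ℝ × (EuclideanSpace ℝ (Fin d)) × ℝ. -/
/-- Joint convexity of the perspective function `(r, x) ↦ x ^ 2 / (2 * r)` on `0 < r`. -/
lemma sq_div_two_mul_convex_comb_le {r s a b : ℝ} (x y : ℝ) (hr : 0 < r) (hs : 0 < s)
    (ha : 0 ≤ a) (hb : 0 ≤ b) (hab : 0 < a * r + b * s) :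
    (a * x + b * y) ^ 2 / (2 * (a * r + b * s)) ≤
      a * (x ^ 2 / (2 * r)) + b * (y ^ 2 / (2 * s)) := by
  obtain ⟨u, rfl⟩ : ∃ u, x = r * u := ⟨x / r, by field_simp⟩
  obtain ⟨v, rfl⟩ : ∃ v, y = s * v := ⟨y / s, by field_simp⟩
  have hu : (r * u) ^ 2 / (2 * r) = r * u ^ 2 / 2 := by field_simp
  have hv : (s * v) ^ 2 / (2 * s) = s * v ^ 2 / 2 := by field_simp
  rw [hu, hv, div_le_iff₀ (by positivity)]
  have h : 0 ≤ a * b * (r * s) * (u - v) ^ 2 := by positivity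
  linarith

/-- The admissible set of the compressible Euler equations (positive density
and positive internal energy) is convex. States are triples
`(ρ, mv, E) : ℝ × EuclideanSpace ℝ (Fin d) × ℝ`. -/
theorem euler_admissible_set_convex
    {d : ℕ} (hd : 1 ≤ d) :
    Convex ℝ {p : ℝ × EuclideanSpace ℝ (Fin d) × ℝ |
      0 < p.1 ∧ 0 < p.2.2 - ‖p.2.1‖ ^ 2 / (2 * p.1)} := by
  rintro ⟨r, m, E⟩ ⟨hr, hE⟩ ⟨s, n, F⟩ ⟨hs, hF⟩ a b ha hb hab
  dsimp only at hr hE hs hF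
  have hpos : 0 < a * r + b * s := convex_Ioi (0 : ℝ) hr hs ha hb hab
  have hener : 0 < a * (E - ‖m‖ ^ 2 / (2 * r)) + b * (F - ‖n‖ ^ 2 / (2 * s)) :=
    convex_Ioi (0 : ℝ) hE hF ha hb hab
  refine ⟨hpos, ?_⟩
  change 0 < a * E + b * F - ‖a • m + b • n‖ ^ 2 / (2 * (a * r + b * s))
  have hnorm : ‖a • m + b • n‖ ≤ a * ‖m‖ + b * ‖n‖ := by
    simpa [norm_smul, abs_of_nonneg ha, abs_of_nonneg hb] using norm_add_le (a • m) (b • n)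
  have hkin : ‖a • m + b • n‖ ^ 2 / (2 * (a * r + b * s)) ≤
      (a * ‖m‖ + b * ‖n‖) ^ 2 / (2 * (a * r + b * s)) := by gcongr
  linarith [sq_div_two_mul_convex_comb_le ‖m‖ ‖n‖ hr hs ha hb hpos]
end

section
/- Let γ > 1, let 0 < ρmin ≤ ρmax, and let smin > 0. Then the local-bounds set B := { (ρ, mv, E) ∈ ℝ × (EuclideanSpace ℝ (Fin d)) × ℝ : ρmin ≤ ρ ≤ ρmax and ρ^(−γ) * (E − ‖mv‖²/(2ρ)) ≥ smin } is a convex subset of ℝ × (EuclideanSpace ℝ (Fin d)) × ℝ. -/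
/-- The quadratic-over-linear function `(r, m) ↦ ‖m‖ ^ 2 / r` is convex on `r > 0`. -/
theorem convexOn_norm_sq_div {V : Type*} [SeminormedAddCommGroup V] [NormedSpace ℝ V] :
    ConvexOn ℝ {p : ℝ × V | 0 < p.1} (fun p => ‖p.2‖ ^ 2 / p.1) := by
  have hconv : Convex ℝ {p : ℝ × V | 0 < p.1} :=
    (convex_Ioi (0 : ℝ)).linear_preimage (LinearMap.fst ℝ ℝ V)
  refine ⟨hconv, ?_⟩
  rintro ⟨r, m⟩ hr ⟨t, n⟩ ht a b ha hb hab
  have hpos : 0 < a * r + b * t := hconv hr ht ha hb hab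
  simp only [Set.mem_ofPred_eq] at hr ht
  simp only [Prod.smul_mk, Prod.mk_add_mk, smul_eq_mul]
  have hnorm : ‖a • m + b • n‖ ≤ a * ‖m‖ + b * ‖n‖ := by
    simpa only [norm_smul, Real.norm_of_nonneg ha, Real.norm_of_nonneg hb]
      using norm_add_le (a • m) (b • n)
  rw [div_le_iff₀ hpos]
  calc ‖a • m + b • n‖ ^ 2 ≤ (a * ‖m‖ + b * ‖n‖) ^ 2 := by gcongr
    _ ≤ (a * ‖m‖ + b * ‖n‖) ^ 2 + a * b * (r * t) * (‖m‖ / r - ‖n‖ / t) ^ 2 :=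
      le_add_of_nonneg_right (by positivity)
    _ = (a * (‖m‖ ^ 2 / r) + b * (‖n‖ ^ 2 / t)) * (a * r + b * t) := by
      field_simp
      ring

/-- For positive density, a lower bound on the rescaled specific entropy is a lower bound on the
total energy. -/
theorem le_rpow_neg_mul_sub_iff {ρ : ℝ} (hρ : 0 < ρ) (γ s k E : ℝ) :
    s ≤ ρ ^ (-γ) * (E - k / (2 * ρ)) ↔ s * ρ ^ γ + k / ρ / 2 ≤ E := by
  rw [Real.rpow_neg hρ.le, inv_mul_eq_div, le_div_iff₀ (Real.rpow_pos_of_pos hρ γ),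
    le_sub_iff_add_le, mul_comm 2 ρ, div_mul_eq_div_div]

/-- The local-bounds set (density bounds and a minimum principle on the
rescaled specific entropy `ρ^(−γ) ε`) of the compressible Euler equations is
convex. States are triples `(ρ, mv, E) : ℝ × EuclideanSpace ℝ (Fin d) × ℝ`,
and `ρ ^ (−γ)` is the real power `Real.rpow`. -/
theorem euler_local_bounds_set_convex
    {d : ℕ} (hd : 1 ≤ d)
    (γ : ℝ) (hγ : 1 < γ)
    (ρmin ρmax : ℝ) (hρmin : 0 < ρmin) (hρ : ρmin ≤ ρmax)
    (smin : ℝ) (hsmin : 0 < smin) :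
    Convex ℝ {p : ℝ × EuclideanSpace ℝ (Fin d) × ℝ |
      (ρmin ≤ p.1 ∧ p.1 ≤ ρmax) ∧
        smin ≤ p.1 ^ (-γ) * (p.2.2 - ‖p.2.1‖ ^ 2 / (2 * p.1))} := by
  rintro ⟨r, m, E⟩ ⟨⟨hr, hr'⟩, hE⟩ ⟨t, n, F⟩ ⟨⟨ht, ht'⟩, hF⟩ a b ha hb hab
  obtain ⟨hlow, hupp⟩ := convex_Icc ρmin ρmax ⟨hr, hr'⟩ ⟨ht, ht'⟩ ha hb hab
  refine ⟨⟨hlow, hupp⟩, ?_⟩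
  have hr0 : 0 < r := hρmin.trans_le hr
  have ht0 : 0 < t := hρmin.trans_le ht
  have hpow := (convexOn_rpow hγ.le).2 (Set.mem_Ici.2 hr0.le) (Set.mem_Ici.2 ht0.le) ha hb hab
  have hkin := (convexOn_norm_sq_div (V := EuclideanSpace ℝ (Fin d))).2
    (x := (r, m)) hr0 (y := (t, n)) ht0 ha hb hab
  refine (le_rpow_neg_mul_sub_iff (hρmin.trans_le hlow) _ _ _ _).2 ?_
  have hE' := mul_le_mul_of_nonneg_left ((le_rpow_neg_mul_sub_iff hr0 _ _ _ _).1 hE) ha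
  have hF' := mul_le_mul_of_nonneg_left ((le_rpow_neg_mul_sub_iff ht0 _ _ _ _).1 hF) hb
  have hpow' := mul_le_mul_of_nonneg_left hpow hsmin.le
  simp only [Prod.smul_mk, Prod.mk_add_mk, smul_eq_mul] at *
  linarith
end
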